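/- Let $\varphi$ be a parabolic automorphism of $\mathbb{D}$ with unique fixed point $a \in \partial\mathbb{D}$, and let $\psi$ be holomorphic on $\mathbb{D}$, continuous on $\overline{\mathbb{D}}$, and bounded away from zero. Then the spectrum of $C_{\psi,\varphi}$ on the Hardy space $H^2(\mathbb{D})$ is the circle $\{\lambda \in \mathbb{C} : |\lambda| = |\psi(a)|\}$. -/

import Mathlib

open Metric Filter

/-- The Hardy space `H²(𝔻)`, modelled as the space of square-summable Taylor coefficient
sequences. -/
abbrev H2 : Type := lp (fun _ : ℕ => ℂ) 2

/-- The holomorphic function on the unit disc associated to an element of `H²(𝔻)`. -/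
noncomputable def H2.toFun (f : H2) (z : ℂ) : ℂ := ∑' n : ℕ, f n * z ^ n

/-!
In the half-plane coordinate `ζ = i (a + z) / (a - z)` the automorphism `φ` is a translation
`ζ ↦ ζ + t` with `t ≠ 0`. Every orbit spends a bounded number of steps outside a given
neighbourhood of `a`, and `‖C_φⁿ‖` grows at most linearly in `n`, so the spectral radius of
`C_{ψ,φ}` is at most `|ψ(a)|`. The inverse is again a weighted composition operator with a parabolic
symbol and weight `1 / ψ(a)` at `a`, hence the spectrum lies on the circle.

Multiplication by the singular inner function `exp (i σ ζ)`, `σ ≥ 0`, is an isometry of `H²` which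
intertwines `C_{ψ,φ}` with `exp (i σ t) C_{ψ,φ}`. At a point of the boundary of the spectrum
`λ - C_{ψ,φ}` is not bounded below, and this property is carried from `λ` to `λ exp (i σ t)`.
So the spectrum, being nonempty, is the whole circle.
-/

open Complex MeasureTheory Real Set Topology

namespace H2

instance nontrivial : Nontrivial H2 :=
  ⟨lp.single 2 0 1, 0, fun h ↦ by simpa using congrArg (fun f : H2 ↦ f 0) h⟩

theorem norm_apply_mul_pow_le (f : H2) (z : ℂ) (n : ℕ) : ‖f n * z ^ n‖ ≤ ‖f‖ * ‖z‖ ^ n := by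
  rw [norm_mul, norm_pow]
  gcongr
  exact lp.norm_apply_le_norm two_ne_zero f n

theorem summable_apply_mul_pow (f : H2) {z : ℂ} (hz : z ∈ ball (0 : ℂ) 1) :
    Summable fun n ↦ f n * z ^ n :=
  .of_norm_bounded ((summable_geometric_of_lt_one (norm_nonneg z)
    (mem_ball_zero_iff.1 hz)).mul_left _) (f.norm_apply_mul_pow_le z)

theorem norm_toFun_le (f : H2) {z : ℂ} (hz : z ∈ ball (0 : ℂ) 1) :
    ‖f.toFun z‖ ≤ (1 - ‖z‖)⁻¹ * ‖f‖ := by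
  rw [mul_comm]
  exact tsum_of_norm_bounded ((hasSum_geometric_of_lt_one (norm_nonneg z)
    (mem_ball_zero_iff.1 hz)).mul_left _) (f.norm_apply_mul_pow_le z)

/-- Evaluation at a point of the disc, as a bounded functional on `H²(𝔻)`. -/
noncomputable def evalCLM {z : ℂ} (hz : z ∈ ball (0 : ℂ) 1) : H2 →L[ℂ] ℂ :=
  LinearMap.mkContinuous
    { toFun := fun f ↦ f.toFun z
      map_add' := fun f g ↦ by
        simp only [toFun, lp.coeFn_add, Pi.add_apply, add_mul]
        exact (f.summable_apply_mul_pow hz).tsum_add (g.summable_apply_mul_pow hz)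
      map_smul' := fun c f ↦ by
        simp only [toFun, lp.coeFn_smul, Pi.smul_apply, smul_eq_mul, mul_assoc, tsum_mul_left,
          RingHom.id_apply] }
    (1 - ‖z‖)⁻¹ fun f ↦ f.norm_toFun_le hz

theorem toFun_add (f g : H2) {z : ℂ} (hz : z ∈ ball (0 : ℂ) 1) :
    (f + g).toFun z = f.toFun z + g.toFun z :=
  map_add (evalCLM hz) f g

theorem toFun_sub (f g : H2) {z : ℂ} (hz : z ∈ ball (0 : ℂ) 1) :
    (f - g).toFun z = f.toFun z - g.toFun z :=
  map_sub (evalCLM hz) f g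

theorem toFun_smul (c : ℂ) (f : H2) {z : ℂ} (hz : z ∈ ball (0 : ℂ) 1) :
    (c • f).toFun z = c * f.toFun z :=
  map_smul (evalCLM hz) c f

theorem toFun_single (n : ℕ) (c z : ℂ) : toFun (lp.single 2 n c) z = c * z ^ n := by
  rw [toFun, tsum_eq_single n fun m hm ↦ by rw [lp.single_apply_ne _ _ _ hm, zero_mul],
    lp.single_apply_self]

theorem hasFPowerSeriesAt_toFun (f : H2) :
    HasFPowerSeriesAt f.toFun (.ofScalars ℂ fun n ↦ f n) 0 := by
  rw [hasFPowerSeriesAt_iff]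
  filter_upwards [ball_mem_nhds (0 : ℂ) one_pos] with z hz
  simpa [toFun, mul_comm] using (f.summable_apply_mul_pow hz).hasSum

theorem ext_toFun {f g : H2} (h : EqOn f.toFun g.toFun (ball 0 1)) : f = g := by
  have hfg : f.toFun =ᶠ[𝓝 0] g.toFun := h.eventuallyEq_of_mem (ball_mem_nhds 0 one_pos)
  have hseries := (f.hasFPowerSeriesAt_toFun.congr hfg).eq_formalMultilinearSeries
    g.hasFPowerSeriesAt_toFun
  ext n
  simpa using congrArg (fun p ↦ p.coeff n) hseries

end H2

/-! ### Parseval's identity for the disc algebra -/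

theorem fourierCoeffOn_comp_circleMap (f : ℂ → ℂ) (n : ℤ) :
    fourierCoeffOn two_pi_pos (fun θ ↦ f (circleMap 0 1 θ)) n =
      circleAverage (fun z ↦ z ^ (-n) * f z) 0 1 := by
  have hfourier (θ : ℝ) :
      fourier (-n) (θ : AddCircle (2 * π - 0)) = circleMap 0 1 θ ^ (-n) := by
    rw [fourier_coe_apply, circleMap_zero, ofReal_one, one_mul, ← Complex.exp_int_mul]
    congr 1
    push_cast
    field_simp
    ring
  simp only [fourierCoeffOn_eq_integral, circleAverage, hfourier, sub_zero, one_div, smul_eq_mul]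

section DiscAlgebra

variable {f : ℂ → ℂ} (hf : DiffContOnCl ℂ f (ball 0 1))
include hf

theorem circleAverage_pow_mul_eq_zero {n : ℕ} (hn : n ≠ 0) :
    circleAverage (fun z ↦ z ^ n * f z) 0 1 = 0 := by
  have hdiff : DiffContOnCl ℂ (fun z ↦ z ^ n * f z) (ball 0 1) :=
    (differentiable_pow n).diffContOnCl.smul hf
  rw [(show DiffContOnCl ℂ (fun z ↦ z ^ n * f z) (ball 0 |1|) by rwa [abs_one]).circleAverage,
    zero_pow hn, zero_mul]

theorem hasSum_circleAverage_mul_pow {z : ℂ} (hz : z ∈ ball (0 : ℂ) 1) :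
    HasSum (fun n : ℕ ↦ circleAverage (fun w ↦ w ^ (-n : ℤ) * f w) 0 1 * z ^ n) (f z) := by
  have hseries := (hf.hasFPowerSeriesOnBall (R := 1) one_pos).hasSum (y := z)
    (by rwa [← NNReal.coe_one, ← eball_coe] at hz)
  rw [zero_add] at hseries
  refine hseries.congr_fun fun n ↦ ?_
  rw [cauchyPowerSeries_apply, NNReal.coe_one, circleAverage_eq_circleIntegral one_ne_zero,
    smul_mul_assoc, mul_comm _ (z ^ n), ← smul_eq_mul (z ^ n), ← circleIntegral.integral_smul]
  congr 2 with w
  simp only [sub_zero, smul_eq_mul, div_pow, zpow_neg, zpow_natCast]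
  ring

theorem continuous_comp_circleMap : Continuous fun θ ↦ f (circleMap 0 1 θ) :=
  hf.continuousOn_ball.comp_continuous (continuous_circleMap 0 1)
    (circleMap_mem_closedBall 0 zero_le_one)

theorem memLp_comp_circleMap :
    MemLp (fun θ ↦ f (circleMap 0 1 θ)) 2 (volume.restrict (Ioc 0 (2 * π))) := by
  obtain ⟨C, hC⟩ := (isCompact_closedBall (0 : ℂ) 1).exists_bound_of_continuousOn
    hf.continuousOn_ball
  exact .of_bound (continuous_comp_circleMap hf).aestronglyMeasurable C
    (.of_forall fun θ ↦ hC _ (circleMap_mem_closedBall 0 zero_le_one θ))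

theorem hasSum_norm_sq_circleAverage :
    HasSum (fun n : ℕ ↦ ‖circleAverage (fun w ↦ w ^ (-n : ℤ) * f w) 0 1‖ ^ 2)
      (circleAverage (fun w ↦ ‖f w‖ ^ 2) 0 1) := by
  have hsum := hasSum_sq_fourierCoeffOn two_pi_pos (memLp_comp_circleMap hf)
  simp only [fourierCoeffOn_comp_circleMap, sub_zero] at hsum
  refine (Nat.cast_injective.hasSum_iff fun i hi ↦ ?_).2 hsum
  obtain ⟨n, rfl | rfl⟩ := i.eq_nat_or_neg
  · exact absurd ⟨n, rfl⟩ hi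
  · have hn : n ≠ 0 := by rintro rfl; simp at hi
    simp [circleAverage_pow_mul_eq_zero hf hn]

end DiscAlgebra

namespace H2

theorem norm_sq_eq_tsum (F : H2) : ‖F‖ ^ 2 = ∑' n, ‖F n‖ ^ 2 := by
  simpa using lp.norm_rpow_eq_tsum (p := 2) (by norm_num) F

variable {f : ℂ → ℂ} (hf : DiffContOnCl ℂ f (ball 0 1))
include hf

theorem exists_toFun_eqOn : ∃ F : H2, EqOn F.toFun f (ball 0 1) ∧
    ‖F‖ ^ 2 = circleAverage (fun w ↦ ‖f w‖ ^ 2) 0 1 := by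
  have hsum := hasSum_norm_sq_circleAverage hf
  have hmem : Memℓp (fun n : ℕ ↦ circleAverage (fun w ↦ w ^ (-n : ℤ) * f w) 0 1) 2 :=
    memℓp_gen (by simpa using hsum.summable)
  refine ⟨⟨_, hmem⟩, fun z hz ↦ (hasSum_circleAverage_mul_pow hf hz).tsum_eq, ?_⟩
  rw [norm_sq_eq_tsum]
  exact hsum.tsum_eq

theorem norm_sq_eq_circleAverage {F : H2} (hF : EqOn F.toFun f (ball 0 1)) :
    ‖F‖ ^ 2 = circleAverage (fun w ↦ ‖f w‖ ^ 2) 0 1 := by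
  obtain ⟨G, hG, hnorm⟩ := exists_toFun_eqOn hf
  rw [ext_toFun (hF.trans hG.symm), hnorm]

end H2

/-! ### Half-plane coordinates -/

/-- The Cayley transform of the disc onto the upper half-plane which sends the boundary point `a`
to `∞`; at `z = a` it takes the junk value `0`. -/
noncomputable def toHalfPlane (a z : ℂ) : ℂ := I * (a + z) / (a - z)

/-- The inverse `ζ ↦ a (ζ - i) / (ζ + i)` of `toHalfPlane a`, written so as to display its distance
to `a`. -/
noncomputable def ofHalfPlane (a ζ : ℂ) : ℂ := a - 2 * I * a / (ζ + I)

/-- The holomorphic self-map of the disc which fixes the boundary point `a` and is `ζ ↦ k ζ + t` in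
the half-plane coordinate. The formula makes sense at `a`, unlike the conjugation by
`toHalfPlane a`. -/
noncomputable def discAffine (a : ℂ) (k t : ℝ) (z : ℂ) : ℂ :=
  a - 2 * I * a * (a - z) / (2 * I * a * k + (t + (1 - k) * I) * (a - z))

/-- The parabolic automorphism of the disc with fixed point `a` which is the translation
`ζ ↦ ζ + t` in the half-plane coordinate. -/
noncomputable abbrev parabolicAut (a : ℂ) (t : ℝ) : ℂ → ℂ := discAffine a 1 t

theorem add_I_ne_zero {ζ : ℂ} (hζ : 0 ≤ ζ.im) : ζ + I ≠ 0 := fun h ↦ by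
  have him := congrArg Complex.im h
  simp only [add_im, I_im, zero_im] at him
  linarith

theorem exp_arctan_mul_I (x : ℝ) :
    Complex.exp (Real.arctan x * I) = Real.cos (Real.arctan x) * (1 + x * I) := by
  have hsin : Real.sin (Real.arctan x) = Real.cos (Real.arctan x) * x := by
    rw [mul_comm, ← div_eq_iff (cos_arctan_pos x).ne', ← Real.tan_eq_sin_div_cos, Real.tan_arctan]
  rw [Complex.exp_mul_I, ← ofReal_cos, ← ofReal_sin, hsin]
  push_cast
  ring

theorem exp_two_mul_arctan_mul_I_mul (x : ℝ) :
    Complex.exp (2 * Real.arctan x * I) * (x + I) = I - x := by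
  have hcos : (Real.cos (Real.arctan x) : ℂ) ≠ 0 := ofReal_ne_zero.2 (cos_arctan_pos x).ne'
  have hneg : Complex.exp (-(Real.arctan x * I)) = Real.cos (Real.arctan x) * (1 - x * I) := by
    simpa [Real.arctan_neg, sub_eq_add_neg] using exp_arctan_mul_I (-x)
  have hsplit : Complex.exp (2 * Real.arctan x * I) * Complex.exp (-(Real.arctan x * I)) =
      Complex.exp (Real.arctan x * I) := by
    rw [← Complex.exp_add]
    ring_nf
  rw [hneg, exp_arctan_mul_I] at hsplit
  refine mul_left_cancel₀ hcos ?_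
  linear_combination I * hsplit + (1 + Complex.exp (2 * Real.arctan x * I)) *
    Real.cos (Real.arctan x) * x * I_sq

section HalfPlane

variable {a : ℂ}

theorem toHalfPlane_add_I {z : ℂ} (hz : z ≠ a) : toHalfPlane a z + I = 2 * I * a / (a - z) := by
  have hsub : a - z ≠ 0 := sub_ne_zero.2 hz.symm
  rw [toHalfPlane]
  field_simp
  ring

theorem discAffine_eq_ofHalfPlane (k t : ℝ) {z : ℂ} (hz : z ≠ a) :
    discAffine a k t z = ofHalfPlane a (k * toHalfPlane a z + t) := by
  have hsub : a - z ≠ 0 := sub_ne_zero.2 hz.symm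
  have hden : k * toHalfPlane a z + t + I =
      (2 * I * a * k + (t + (1 - k) * I) * (a - z)) / (a - z) := by
    rw [eq_sub_of_add_eq (toHalfPlane_add_I hz)]
    field_simp
    ring
  rw [discAffine, ofHalfPlane, hden, div_div_eq_mul_div]

theorem discAffine_self (a : ℂ) (k t : ℝ) : discAffine a k t a = a := by simp [discAffine]

theorem continuous_ofHalfPlane_ofReal (a : ℂ) : Continuous fun x : ℝ ↦ ofHalfPlane a x := by
  unfold ofHalfPlane
  have hne (x : ℝ) : (x : ℂ) + I ≠ 0 := add_I_ne_zero (ofReal_im x).ge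
  fun_prop (disch := exact hne _)

variable (ha : ‖a‖ = 1)
include ha

theorem ne_zero_of_norm_eq_one : a ≠ 0 := norm_ne_zero_iff.1 (ha.trans_ne one_ne_zero)

theorem ne_of_mem_ball {z : ℂ} (hz : z ∈ ball (0 : ℂ) 1) : z ≠ a := by
  rintro rfl
  exact (mem_ball_zero_iff.1 hz).ne ha

theorem ofHalfPlane_ne {ζ : ℂ} (hζ : 0 ≤ ζ.im) : ofHalfPlane a ζ ≠ a := by
  simp [ofHalfPlane, add_I_ne_zero hζ, ne_zero_of_norm_eq_one ha]

theorem toHalfPlane_ofHalfPlane {ζ : ℂ} (hζ : 0 ≤ ζ.im) :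
    toHalfPlane a (ofHalfPlane a ζ) = ζ := by
  have hadd := toHalfPlane_add_I (ofHalfPlane_ne ha hζ)
  have ha0 := ne_zero_of_norm_eq_one ha
  rwa [ofHalfPlane, sub_sub_cancel, div_div_cancel₀ (by simp [ha0]), ← ofHalfPlane, add_left_inj]
    at hadd

theorem im_toHalfPlane (z : ℂ) : (toHalfPlane a z).im = (1 - ‖z‖ ^ 2) / ‖a - z‖ ^ 2 := by
  have hsq : a.re * a.re + a.im * a.im = 1 := by
    rw [← Complex.normSq_apply, Complex.normSq_eq_norm_sq, ha, one_pow]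
  rw [toHalfPlane, Complex.div_im, ← Complex.normSq_eq_norm_sq, ← Complex.normSq_eq_norm_sq,
    ← sub_div, Complex.normSq_apply z]
  congr 1
  simp only [mul_im, mul_re, add_re, add_im, sub_re, sub_im, I_re, I_im]
  linear_combination hsq

theorem one_sub_norm_ofHalfPlane_sq {ζ : ℂ} (hζ : 0 ≤ ζ.im) :
    1 - ‖ofHalfPlane a ζ‖ ^ 2 = ζ.im * ‖a - ofHalfPlane a ζ‖ ^ 2 := by
  have hsub : a - ofHalfPlane a ζ ≠ 0 := sub_ne_zero.2 (ofHalfPlane_ne ha hζ).symm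
  rw [← div_eq_iff (by positivity), ← im_toHalfPlane ha, toHalfPlane_ofHalfPlane ha hζ]

theorem im_toHalfPlane_nonneg {z : ℂ} (hz : z ∈ closedBall (0 : ℂ) 1) :
    0 ≤ (toHalfPlane a z).im := by
  have hle : ‖z‖ ^ 2 ≤ 1 := pow_le_one₀ (norm_nonneg z) (mem_closedBall_zero_iff.1 hz)
  rw [im_toHalfPlane ha]
  exact div_nonneg (sub_nonneg.2 hle) (sq_nonneg _)

theorem im_toHalfPlane_pos {z : ℂ} (hz : z ∈ ball (0 : ℂ) 1) : 0 < (toHalfPlane a z).im := by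
  have hlt : ‖z‖ ^ 2 < 1 := pow_lt_one₀ (norm_nonneg z) (mem_ball_zero_iff.1 hz) two_ne_zero
  have hsub : a - z ≠ 0 := sub_ne_zero.2 (ne_of_mem_ball ha hz).symm
  rw [im_toHalfPlane ha]
  exact div_pos (sub_pos.2 hlt) (by positivity)

theorem ofHalfPlane_mem_closedBall {ζ : ℂ} (hζ : 0 ≤ ζ.im) :
    ofHalfPlane a ζ ∈ closedBall (0 : ℂ) 1 := by
  have heq := one_sub_norm_ofHalfPlane_sq ha hζ
  rw [mem_closedBall_zero_iff, ← sq_le_one_iff₀ (norm_nonneg _), ← sub_nonneg, heq]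
  positivity

theorem ofHalfPlane_mem_ball {ζ : ℂ} (hζ : 0 < ζ.im) : ofHalfPlane a ζ ∈ ball (0 : ℂ) 1 := by
  have heq := one_sub_norm_ofHalfPlane_sq ha hζ.le
  have hsub : a - ofHalfPlane a ζ ≠ 0 := sub_ne_zero.2 (ofHalfPlane_ne ha hζ.le).symm
  rw [mem_ball_zero_iff, ← sq_lt_one_iff₀ (norm_nonneg _), ← sub_pos, heq]
  positivity

theorem ofHalfPlane_ofReal_eq_circleMap (x : ℝ) :
    ofHalfPlane a x = circleMap 0 1 (2 * Real.arctan x + π + arg a) := by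
  have hne : (x : ℂ) + I ≠ 0 := add_I_ne_zero (ofReal_im x).ge
  have harg : Complex.exp (arg a * I) = a := by simpa [ha] using norm_mul_exp_arg_mul_I a
  have harctan := exp_two_mul_arctan_mul_I_mul x
  have hexp : circleMap 0 1 (2 * Real.arctan x + π + arg a) =
      -(Complex.exp (2 * Real.arctan x * I) * a) := by
    simp only [circleMap_zero, ofReal_add, ofReal_mul, add_mul, Complex.exp_add, exp_pi_mul_I,
      harg, ofReal_one, ofReal_ofNat]
    ring
  rw [hexp, ofHalfPlane, eq_comm, ← mul_left_inj' hne, sub_mul, div_mul_cancel₀ _ hne]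
  linear_combination -a * harctan

theorem circleAverage_eq_integral_ofHalfPlane {E : Type*} [NormedAddCommGroup E] [NormedSpace ℝ E]
    (g : ℂ → E) :
    circleAverage g 0 1 = π⁻¹ • ∫ x : ℝ, (1 + x ^ 2)⁻¹ • g (ofHalfPlane a x) := by
  have harctan := integral_image_eq_integral_abs_deriv_smul (s := univ)
    MeasurableSet.univ (fun x _ ↦ (hasDerivAt_arctan' x).hasDerivWithinAt) arctan_injective.injOn
    fun u ↦ g (circleMap 0 1 (2 * u + π + arg a))
  have hpos (x : ℝ) : |(1 + x ^ 2)⁻¹| = (1 + x ^ 2)⁻¹ := abs_of_pos (by positivity)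
  simp only [image_univ, range_arctan, Measure.restrict_univ, hpos] at harctan
  simp only [ofHalfPlane_ofReal_eq_circleMap ha]
  rw [← harctan, ← integral_Ioc_eq_integral_Ioo, ← intervalIntegral.integral_of_le
    (by linarith [pi_pos]), intervalIntegral.integral_comp_mul_add
    (fun θ ↦ g (circleMap 0 1 (θ + arg a))) two_ne_zero, circleAverage_eq_integral_add (arg a),
    smul_smul, mul_inv, mul_comm]
  ring_nf

theorem integrable_inv_one_add_sq_smul_ofHalfPlane {E : Type*} [NormedAddCommGroup E]
    [NormedSpace ℝ E] {g : ℂ → E} (hg : ContinuousOn g (closedBall 0 1)) :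
    Integrable fun x : ℝ ↦ (1 + x ^ 2)⁻¹ • g (ofHalfPlane a x) := by
  have hmem (x : ℝ) := ofHalfPlane_mem_closedBall ha (ofReal_im x).ge
  obtain ⟨C, hC⟩ := (isCompact_closedBall (0 : ℂ) 1).exists_bound_of_continuousOn hg
  exact integrable_inv_one_add_sq.smul_bdd C
    (hg.comp_continuous (continuous_ofHalfPlane_ofReal a) hmem).aestronglyMeasurable
    (.of_forall fun x ↦ hC _ (hmem x))

theorem discAffine_ofHalfPlane_ofReal (k t x : ℝ) :
    discAffine a k t (ofHalfPlane a x) = ofHalfPlane a ↑(k * x + t) := by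
  have hx : 0 ≤ (x : ℂ).im := (ofReal_im x).ge
  rw [discAffine_eq_ofHalfPlane k t (ofHalfPlane_ne ha hx), toHalfPlane_ofHalfPlane ha hx]
  push_cast
  rfl

section DiscAffine

variable {k : ℝ} (hk : 0 < k) (t : ℝ)
include hk

theorem im_mul_toHalfPlane_add_nonneg {z : ℂ} (hz : z ∈ closedBall (0 : ℂ) 1) :
    0 ≤ (k * toHalfPlane a z + t).im := by
  simpa using mul_nonneg hk.le (im_toHalfPlane_nonneg ha hz)

theorem im_mul_toHalfPlane_add_pos {z : ℂ} (hz : z ∈ ball (0 : ℂ) 1) :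
    0 < (k * toHalfPlane a z + t).im := by
  simpa using mul_pos hk (im_toHalfPlane_pos ha hz)

theorem toHalfPlane_discAffine {z : ℂ} (hz : z ∈ closedBall (0 : ℂ) 1) (hza : z ≠ a) :
    toHalfPlane a (discAffine a k t z) = k * toHalfPlane a z + t := by
  rw [discAffine_eq_ofHalfPlane k t hza,
    toHalfPlane_ofHalfPlane ha (im_mul_toHalfPlane_add_nonneg ha hk t hz)]

theorem discAffine_ne {z : ℂ} (hz : z ∈ closedBall (0 : ℂ) 1) (hza : z ≠ a) :
    discAffine a k t z ≠ a := by
  rw [discAffine_eq_ofHalfPlane k t hza]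
  exact ofHalfPlane_ne ha (im_mul_toHalfPlane_add_nonneg ha hk t hz)

theorem mapsTo_discAffine_closedBall :
    MapsTo (discAffine a k t) (closedBall 0 1) (closedBall 0 1) := by
  intro z hz
  rcases eq_or_ne z a with rfl | hza
  · rwa [discAffine_self]
  · rw [discAffine_eq_ofHalfPlane k t hza]
    exact ofHalfPlane_mem_closedBall ha (im_mul_toHalfPlane_add_nonneg ha hk t hz)

theorem mapsTo_discAffine_ball : MapsTo (discAffine a k t) (ball 0 1) (ball 0 1) := by
  intro z hz
  rw [discAffine_eq_ofHalfPlane k t (ne_of_mem_ball ha hz)]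
  exact ofHalfPlane_mem_ball ha (im_mul_toHalfPlane_add_pos ha hk t hz)

theorem discAffine_denom_ne_zero {z : ℂ} (hz : z ∈ closedBall (0 : ℂ) 1) :
    2 * I * a * k + (t + (1 - k) * I) * (a - z) ≠ 0 := by
  have ha0 := ne_zero_of_norm_eq_one ha
  rcases eq_or_ne z a with rfl | hza
  · simp [ha0, hk.ne']
  · have hne := discAffine_ne ha hk t hz hza
    contrapose! hne
    simp [discAffine, hne]

theorem diffContOnCl_discAffine : DiffContOnCl ℂ (discAffine a k t) (ball 0 1) := by
  have hden (z : ℂ) (hz : z ∈ closedBall (0 : ℂ) 1) := discAffine_denom_ne_zero ha hk t hz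
  unfold discAffine
  refine .mk_ball (fun z hz ↦ ?_) fun z hz ↦ ?_
  · have := hden z (ball_subset_closedBall hz)
    fun_prop (disch := assumption)
  · have := hden z hz
    fun_prop (disch := assumption)

theorem discAffine_discAffine {z : ℂ} (hz : z ∈ closedBall (0 : ℂ) 1) (k' t' : ℝ) :
    discAffine a k' t' (discAffine a k t z) = discAffine a (k' * k) (k' * t + t') z := by
  rcases eq_or_ne z a with rfl | hza
  · simp only [discAffine_self]
  · rw [discAffine_eq_ofHalfPlane k' t' (discAffine_ne ha hk t hz hza),
      toHalfPlane_discAffine ha hk t hz hza, discAffine_eq_ofHalfPlane _ _ hza]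
    push_cast
    ring_nf

end DiscAffine

theorem parabolicAut_zero (z : ℂ) : parabolicAut a 0 z = z := by
  have ha0 := ne_zero_of_norm_eq_one ha
  simp [parabolicAut, discAffine, ha0]

theorem parabolicAut_parabolicAut (s t : ℝ) {z : ℂ} (hz : z ∈ closedBall (0 : ℂ) 1) :
    parabolicAut a s (parabolicAut a t z) = parabolicAut a (s + t) z := by
  refine (discAffine_discAffine ha one_pos t hz 1 s).trans ?_
  rw [one_mul, one_mul, add_comm]

theorem iterate_parabolicAut (t : ℝ) (n : ℕ) {z : ℂ} (hz : z ∈ closedBall (0 : ℂ) 1) :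
    (parabolicAut a t)^[n] z = parabolicAut a (n * t) z := by
  induction n with
  | zero => simp [parabolicAut_zero ha]
  | succ n ih =>
    rw [Function.iterate_succ_apply', ih, parabolicAut_parabolicAut ha _ _ hz]
    push_cast
    ring_nf

theorem toHalfPlane_parabolicAut (t : ℝ) {z : ℂ} (hz : z ∈ closedBall (0 : ℂ) 1) (hza : z ≠ a) :
    toHalfPlane a (parabolicAut a t z) = toHalfPlane a z + t := by
  simpa using toHalfPlane_discAffine ha one_pos t hz hza

theorem parabolicAut_ofHalfPlane_ofReal (t x : ℝ) :
    parabolicAut a t (ofHalfPlane a x) = ofHalfPlane a ↑(x + t) := by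
  simpa using discAffine_ofHalfPlane_ofReal ha 1 t x

end HalfPlane

namespace H2

/-- The elements of `H²(𝔻)` which extend continuously to the closed disc with value `0` at `a`.
On this dense subspace a multiplier which is continuous off `a` and bounded keeps the product
continuous up to the circle. -/
def vanishingAt (a : ℂ) : Submodule ℂ H2 where
  carrier := {F | ∃ f, DiffContOnCl ℂ f (ball 0 1) ∧ f a = 0 ∧ EqOn F.toFun f (ball 0 1)}
  add_mem' := by
    rintro F G ⟨f, hf, hfa, hF⟩ ⟨g, hg, hga, hG⟩
    refine ⟨f + g, hf.add hg, by simp [hfa, hga], fun z hz ↦ ?_⟩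
    rw [toFun_add F G hz, hF hz, hG hz, Pi.add_apply]
  zero_mem' := ⟨0, diffContOnCl_const, rfl, fun z hz ↦ map_zero (evalCLM hz)⟩
  smul_mem' := by
    rintro c F ⟨f, hf, hfa, hF⟩
    refine ⟨c • f, hf.const_smul c, by simp [hfa], fun z hz ↦ ?_⟩
    rw [toFun_smul c F hz, hF hz, Pi.smul_apply, smul_eq_mul]

theorem single_sub_single_mem_vanishingAt (a : ℂ) (n : ℕ) :
    lp.single 2 n a - lp.single 2 (n + 1) 1 ∈ vanishingAt a := by
  have hdiff : Differentiable ℂ fun z : ℂ ↦ a * z ^ n - 1 * z ^ (n + 1) := by fun_prop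
  refine ⟨_, hdiff.diffContOnCl, by ring, fun z hz ↦ ?_⟩
  rw [toFun_sub _ _ hz, toFun_single, toFun_single]

theorem dense_vanishingAt {a : ℂ} (ha : ‖a‖ = 1) : Dense (vanishingAt a : Set H2) := by
  rw [Submodule.dense_iff_topologicalClosure_eq_top, Submodule.topologicalClosure_eq_top_iff,
    Submodule.eq_bot_iff]
  intro g hg
  have hnorm_succ (n : ℕ) : ‖g (n + 1)‖ = ‖g n‖ := by
    have horth := (Submodule.mem_orthogonal _ _).1 hg _ (single_sub_single_mem_vanishingAt a n)
    rw [inner_sub_left, lp.inner_single_left, lp.inner_single_left, sub_eq_zero] at horth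
    simpa [ha] using (congrArg norm horth).symm
  have hnorm_zero (n : ℕ) : ‖g n‖ = ‖g 0‖ := by
    induction n with
    | zero => rfl
    | succ n ih => rw [hnorm_succ, ih]
  have hsummable : Summable fun n ↦ ‖g n‖ ^ (2 : ENNReal).toReal :=
    (lp.memℓp g).summable (by norm_num)
  have hzero : ‖g 0‖ = 0 := by
    simpa [hnorm_zero, summable_const_iff] using hsummable
  ext n
  exact norm_eq_zero.1 ((hnorm_zero n).trans hzero)

theorem norm_sq_eq_integral {a : ℂ} (ha : ‖a‖ = 1) {f : ℂ → ℂ}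
    (hf : DiffContOnCl ℂ f (ball 0 1)) {F : H2} (hF : EqOn F.toFun f (ball 0 1)) :
    ‖F‖ ^ 2 = π⁻¹ * ∫ x : ℝ, (1 + x ^ 2)⁻¹ * ‖f (ofHalfPlane a x)‖ ^ 2 := by
  rw [norm_sq_eq_circleAverage hf hF]
  exact circleAverage_eq_integral_ofHalfPlane ha _

end H2

/-! ### Weighted composition operators -/

/-- `T` is the weighted composition operator `C_{ψ,φ} f = ψ · (f ∘ φ)` on `H²(𝔻)`. -/
def IsWeightedComp (ψ φ : ℂ → ℂ) (T : H2 →L[ℂ] H2) : Prop :=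
  ∀ f : H2, ∀ z ∈ ball (0 : ℂ) 1, (T f).toFun z = ψ z * f.toFun (φ z)

namespace IsWeightedComp

variable {ψ ω φ χ : ℂ → ℂ} {S T : H2 →L[ℂ] H2}

theorem one : IsWeightedComp (fun _ ↦ 1) id 1 := fun f z _ ↦ by simp

theorem mul (hS : IsWeightedComp ψ φ S) (hT : IsWeightedComp ω χ T)
    (hφ : MapsTo φ (ball 0 1) (ball 0 1)) :
    IsWeightedComp (fun z ↦ ψ z * ω (φ z)) (χ ∘ φ) (S * T) := fun f z hz ↦ by
  rw [mul_apply_eq_comp, hS _ z hz, hT _ _ (hφ hz), mul_assoc, Function.comp_apply]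

theorem pow (hT : IsWeightedComp ψ φ T) (hφ : MapsTo φ (ball 0 1) (ball 0 1)) (n : ℕ) :
    IsWeightedComp (fun z ↦ ∏ j ∈ Finset.range n, ψ (φ^[j] z)) φ^[n] (T ^ n) := by
  induction n with
  | zero => simpa using! one
  | succ n ih =>
    simp_rw [Finset.prod_range_succ, pow_succ, Function.iterate_succ']
    exact ih.mul hT (hφ.iterate n)

theorem congr (hT : IsWeightedComp ψ φ T) (hψ : EqOn ψ ω (ball 0 1)) (hφ : EqOn φ χ (ball 0 1)) :
    IsWeightedComp ω χ T := fun f z hz ↦ by rw [hT f z hz, hψ hz, hφ hz]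

theorem unique (hT : IsWeightedComp ψ φ T) (hS : IsWeightedComp ψ φ S) : T = S :=
  ContinuousLinearMap.ext fun f ↦ H2.ext_toFun fun z hz ↦ by rw [hT f z hz, hS f z hz]

theorem exists_of_dense {D : Submodule ℂ H2} (hD : Dense (D : Set H2))
    (hφ : MapsTo φ (ball 0 1) (ball 0 1)) {C : ℝ}
    (h : ∀ f ∈ D, ∃ F : H2,
      (∀ z ∈ ball (0 : ℂ) 1, F.toFun z = ψ z * f.toFun (φ z)) ∧ ‖F‖ ≤ C * ‖f‖) :
    ∃ T, IsWeightedComp ψ φ T ∧ ∀ f, ‖T f‖ ≤ C * ‖f‖ := by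
  choose! L hLfun hLnorm using h
  let L₀ : D →ₗ[ℂ] H2 :=
    { toFun := fun f ↦ L f
      map_add' := fun f g ↦ H2.ext_toFun fun z hz ↦ by
        rw [H2.toFun_add _ _ hz, hLfun _ (f + g).2 z hz, hLfun _ f.2 z hz, hLfun _ g.2 z hz,
          Submodule.coe_add, H2.toFun_add _ _ (hφ hz), mul_add]
      map_smul' := fun c f ↦ H2.ext_toFun fun z hz ↦ by
        rw [H2.toFun_smul _ _ hz, hLfun _ (c • f).2 z hz, hLfun _ f.2 z hz, Submodule.coe_smul,
          H2.toFun_smul _ _ (hφ hz), mul_left_comm, RingHom.id_apply] }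
  have hdense : DenseRange D.subtype := by simpa [DenseRange] using hD
  have hbound (f : D) : ‖L₀ f‖ ≤ C * ‖D.subtype f‖ := hLnorm f f.2
  refine ⟨L₀.extendOfNorm D.subtype, fun f z hz ↦ ?_,
    LinearMap.norm_extendOfNorm_apply_le hdense C hbound⟩
  refine hdense.induction (fun _ ⟨g, hg⟩ ↦ ?_) (isClosed_eq
    ((H2.evalCLM hz).continuous.comp (L₀.extendOfNorm D.subtype).continuous)
    ((H2.evalCLM (hφ hz)).continuous.const_mul (ψ z))) f
  rw [← hg, LinearMap.extendOfNorm_eq hdense ⟨C, hbound⟩]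
  exact hLfun _ g.2 z hz

end IsWeightedComp

theorem inv_one_add_sq_le (x t : ℝ) :
    (1 + x ^ 2)⁻¹ ≤ (1 + |t|) ^ 2 * (1 + (x + t) ^ 2)⁻¹ := by
  rw [← div_eq_mul_inv, le_div_iff₀ (by positivity), inv_mul_le_iff₀ (by positivity)]
  have hxt : x * t ≤ |x| * |t| := (le_abs_self _).trans_eq (abs_mul x t)
  nlinarith [sq_abs t, sq_abs x, abs_nonneg t, sq_nonneg (x * t),
    mul_nonneg (abs_nonneg t) (sq_nonneg (|x| - 1)), mul_nonneg (abs_nonneg t) (sq_nonneg x)]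

section ParabolicOperators

variable {a : ℂ} (ha : ‖a‖ = 1) (t : ℝ) {ψ : ℂ → ℂ} (hψ : DiffContOnCl ℂ ψ (ball 0 1)) {M : ℝ}
  (hM : ∀ z ∈ closedBall (0 : ℂ) 1, ‖ψ z‖ ≤ M)
include ha hψ

theorem diffContOnCl_comp_parabolicAut :
    DiffContOnCl ℂ (fun z ↦ ψ (parabolicAut a t z)) (ball 0 1) :=
  hψ.comp (diffContOnCl_discAffine ha one_pos t) (mapsTo_discAffine_ball ha one_pos t)

include hM

theorem integral_norm_sq_mul_comp_parabolicAut_le {f : ℂ → ℂ}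
    (hf : DiffContOnCl ℂ f (ball 0 1)) :
    ∫ x : ℝ, (1 + x ^ 2)⁻¹ * ‖ψ (ofHalfPlane a x) * f (parabolicAut a t (ofHalfPlane a x))‖ ^ 2 ≤
      (M * (1 + |t|)) ^ 2 * ∫ x : ℝ, (1 + x ^ 2)⁻¹ * ‖f (ofHalfPlane a x)‖ ^ 2 := by
  have hcont : ContinuousOn (fun z ↦ ψ z * f (parabolicAut a t z)) (closedBall 0 1) :=
    (hψ.smul (diffContOnCl_comp_parabolicAut ha t hf)).continuousOn_ball
  have hint := integrable_inv_one_add_sq_smul_ofHalfPlane ha (hf.continuousOn_ball.norm.pow 2)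
  rw [← integral_add_right_eq_self (fun x : ℝ ↦ _ * ‖f (ofHalfPlane a x)‖ ^ 2) t,
    ← integral_const_mul]
  refine integral_mono (integrable_inv_one_add_sq_smul_ofHalfPlane ha (hcont.norm.pow 2))
    ((hint.comp_add_right t).const_mul _) fun x ↦ ?_
  have hψx : ‖ψ (ofHalfPlane a x)‖ ≤ M := hM _ (ofHalfPlane_mem_closedBall ha (ofReal_im x).ge)
  simp only [parabolicAut_ofHalfPlane_ofReal ha, norm_mul, mul_pow]
  calc (1 + x ^ 2)⁻¹ * (‖ψ (ofHalfPlane a x)‖ ^ 2 * ‖f (ofHalfPlane a ↑(x + t))‖ ^ 2)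
      ≤ (1 + |t|) ^ 2 * (1 + (x + t) ^ 2)⁻¹ * (M ^ 2 * ‖f (ofHalfPlane a ↑(x + t))‖ ^ 2) := by
        gcongr
        exact inv_one_add_sq_le x t
    _ = _ := by ring

theorem exists_isWeightedComp_parabolicAut :
    ∃ T, IsWeightedComp ψ (parabolicAut a t) T ∧ ∀ f, ‖T f‖ ≤ M * (1 + |t|) * ‖f‖ := by
  have hM0 : 0 ≤ M := (norm_nonneg (ψ 0)).trans (hM 0 (by simp))
  refine IsWeightedComp.exists_of_dense (H2.dense_vanishingAt ha)
    (mapsTo_discAffine_ball ha one_pos t) ?_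
  rintro F ⟨f, hf, -, hF⟩
  have hG := hψ.smul (diffContOnCl_comp_parabolicAut ha t hf)
  obtain ⟨G, hGfun, -⟩ := H2.exists_toFun_eqOn hG
  refine ⟨G, fun z hz ↦ ?_, ?_⟩
  · rw [hGfun hz, hF (mapsTo_discAffine_ball ha one_pos t hz)]
    rfl
  · rw [← sq_le_sq₀ (norm_nonneg _) (by positivity), mul_pow, H2.norm_sq_eq_integral ha hG hGfun,
      H2.norm_sq_eq_integral ha hf hF, mul_left_comm]
    gcongr
    exact integral_norm_sq_mul_comp_parabolicAut_le ha t hψ hM hf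

theorem norm_le_of_isWeightedComp_parabolicAut {T : H2 →L[ℂ] H2}
    (hT : IsWeightedComp ψ (parabolicAut a t) T) : ‖T‖ ≤ M * (1 + |t|) := by
  have hM0 : 0 ≤ M := (norm_nonneg (ψ 0)).trans (hM 0 (by simp))
  obtain ⟨S, hS, hbound⟩ := exists_isWeightedComp_parabolicAut ha t hψ hM
  rw [hT.unique hS]
  exact S.opNorm_le_bound (by positivity) hbound

end ParabolicOperators

/-! ### The spectrum lies on the circle -/

theorem norm_le_of_mem_spectrum_of_norm_pow_le {A : Type*} [NormedRing A] [NormedAlgebra ℂ A]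
    [CompleteSpace A] {x : A} {K ρ : ℝ} (hρ : 0 < ρ)
    (h : ∀ n : ℕ, ‖x ^ n‖ ≤ K * ((n + 1) * ρ ^ n)) {lam : ℂ} (hlam : lam ∈ spectrum ℂ x) :
    ‖lam‖ ≤ ρ := by
  by_contra! hlt
  have hpow (n : ℕ) : 1 ≤ K * ‖(1 : A)‖ * (n * (ρ / ‖lam‖) ^ n + (ρ / ‖lam‖) ^ n) := by
    have hlamn : 0 < ‖lam‖ ^ n := pow_pos (hρ.trans hlt) n
    have hle : ‖lam‖ ^ n ≤ K * ((n + 1) * ρ ^ n) * ‖(1 : A)‖ := by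
      rw [← norm_pow]
      exact (spectrum.norm_le_norm_mul_of_mem (spectrum.pow_mem_pow x n hlam)).trans
        (mul_le_mul_of_nonneg_right (h n) (norm_nonneg _))
    calc 1 ≤ K * ((n + 1) * ρ ^ n) * ‖(1 : A)‖ / ‖lam‖ ^ n := (one_le_div hlamn).2 hle
      _ = _ := by ring
  have hratio : |ρ / ‖lam‖| < 1 := by
    rwa [abs_of_pos (div_pos hρ (hρ.trans hlt)), div_lt_one (hρ.trans hlt)]
  have htendsto := ((tendsto_self_mul_const_pow_of_abs_lt_one hratio).add
    (tendsto_pow_atTop_nhds_zero_of_abs_lt_one hratio)).const_mul (K * ‖(1 : A)‖)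
  rw [add_zero, mul_zero] at htendsto
  exact not_le_of_gt one_pos (ge_of_tendsto' htendsto hpow)

theorem card_le_floor_of_abs_add_mul_le {y t R : ℝ} (ht : t ≠ 0) {s : Finset ℕ}
    (hs : ∀ j ∈ s, |y + j * t| ≤ R) : s.card ≤ ⌊2 * R / |t|⌋₊ + 1 := by
  rcases s.eq_empty_or_nonempty with rfl | hne
  · simp
  suffices hsub : s ⊆ Finset.Icc (s.min' hne) (s.min' hne + ⌊2 * R / |t|⌋₊) by
    simpa [add_assoc, add_comm 1] using Finset.card_le_card hsub
  intro j hj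
  have hmin := s.min'_le j hj
  rw [Finset.mem_Icc, ← Nat.sub_le_iff_le_add']
  refine ⟨hmin, Nat.le_floor ?_⟩
  rw [le_div_iff₀ (abs_pos.2 ht), Nat.cast_sub hmin]
  calc ((j : ℝ) - s.min' hne) * |t|
      = |(y + j * t) - (y + s.min' hne * t)| := by
        rw [add_sub_add_left_eq_sub, ← sub_mul, abs_mul,
          abs_of_nonneg (sub_nonneg.2 (Nat.cast_le.2 hmin))]
    _ ≤ |y + j * t| + |y + s.min' hne * t| := abs_sub _ _
    _ ≤ 2 * R := by linarith [hs j hj, hs _ (s.min'_mem hne)]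

theorem prod_le_of_card_filter_le {ι : Type*} {s : Finset ι} {f : ι → ℝ} {p : ι → Prop}
    [DecidablePred p] {K ρ : ℝ} {N : ℕ} (hρ : 0 < ρ) (hρK : ρ ≤ K) (hf : ∀ i ∈ s, 0 ≤ f i)
    (hK : ∀ i ∈ s, f i ≤ K) (hp : ∀ i ∈ s, ¬ p i → f i ≤ ρ) (hN : (s.filter p).card ≤ N) :
    ∏ i ∈ s, f i ≤ (K / ρ) ^ N * ρ ^ s.card := by
  have hfactor (i : ι) (hi : i ∈ s) : f i ≤ (if p i then K / ρ else 1) * ρ := by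
    split_ifs with hpi
    · rw [div_mul_cancel₀ _ hρ.ne']
      exact hK i hi
    · rw [one_mul]
      exact hp i hi hpi
  calc ∏ i ∈ s, f i ≤ ∏ i ∈ s, (if p i then K / ρ else 1) * ρ := Finset.prod_le_prod hf hfactor
    _ = (K / ρ) ^ (s.filter p).card * ρ ^ s.card := by
      rw [Finset.prod_mul_distrib, ← Finset.prod_filter, Finset.prod_const, Finset.prod_const]
    _ ≤ (K / ρ) ^ N * ρ ^ s.card := by
      gcongr
      exact (one_le_div hρ).2 hρK

section SpectrumSubset

variable {a : ℂ} (ha : ‖a‖ = 1) {t : ℝ} (ht : t ≠ 0)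
include ha

theorem abs_re_toHalfPlane_mul_norm_sub_le {z : ℂ} (hz : z ≠ a) :
    |(toHalfPlane a z).re| * ‖a - z‖ ≤ 2 := by
  have hsub : 0 < ‖a - z‖ := norm_pos_iff.2 (sub_ne_zero.2 hz.symm)
  rw [← le_div_iff₀ hsub]
  calc |(toHalfPlane a z).re| = |(toHalfPlane a z + I).re| := by simp
    _ ≤ ‖toHalfPlane a z + I‖ := abs_re_le_norm _
    _ = 2 / ‖a - z‖ := by simp [toHalfPlane_add_I hz, ha]

variable {ψ : ℂ → ℂ} (hψ : DiffContOnCl ℂ ψ (ball 0 1))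

section PowersAndInverse

include hψ

theorem diffContOnCl_inv_comp_parabolicAut (hψ0 : ∀ z ∈ closedBall (0 : ℂ) 1, ψ z ≠ 0) :
    DiffContOnCl ℂ (fun z ↦ (ψ (parabolicAut a t z))⁻¹) (ball 0 1) := by
  refine (diffContOnCl_comp_parabolicAut ha t hψ).inv fun z hz ↦ ?_
  rw [closure_ball _ one_ne_zero] at hz
  exact hψ0 _ (mapsTo_discAffine_closedBall ha one_pos t hz)

variable {T : H2 →L[ℂ] H2} (hT : IsWeightedComp ψ (parabolicAut a t) T)
include hT

theorem exists_isWeightedComp_inv (hψ0 : ∀ z ∈ closedBall (0 : ℂ) 1, ψ z ≠ 0) :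
    ∃ S, IsWeightedComp (fun z ↦ (ψ (parabolicAut a (-t) z))⁻¹) (parabolicAut a (-t)) S ∧
      T * S = 1 ∧ S * T = 1 := by
  have hω := diffContOnCl_inv_comp_parabolicAut (t := -t) ha hψ hψ0
  obtain ⟨M, hM⟩ :=
    (isCompact_closedBall (0 : ℂ) 1).exists_bound_of_continuousOn hω.continuousOn_ball
  obtain ⟨S, hS, -⟩ := exists_isWeightedComp_parabolicAut ha (-t) hω hM
  have hcancel (s : ℝ) {z : ℂ} (hz : z ∈ ball (0 : ℂ) 1) :
      parabolicAut a (-s) (parabolicAut a s z) = z := by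
    rw [parabolicAut_parabolicAut ha _ _ (ball_subset_closedBall hz), neg_add_cancel,
      parabolicAut_zero ha]
  have hball (s : ℝ) := mapsTo_discAffine_ball ha one_pos s
  refine ⟨S, hS, ((hT.mul hS (hball t)).congr (fun z hz ↦ ?_) fun z hz ↦ hcancel t hz).unique .one,
    ((hS.mul hT (hball (-t))).congr (fun z hz ↦ ?_) fun z hz ↦ ?_).unique .one⟩
  · simp only [hcancel t hz]
    exact mul_inv_cancel₀ (hψ0 z (ball_subset_closedBall hz))
  · exact inv_mul_cancel₀ (hψ0 _ (ball_subset_closedBall (hball (-t) hz)))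
  · simpa using hcancel (-t) hz

theorem norm_pow_le_of_isWeightedComp_parabolicAut {M : ℝ} (n : ℕ)
    (hM : ∀ z ∈ closedBall (0 : ℂ) 1,
      ‖∏ j ∈ Finset.range n, ψ (parabolicAut a (j * t) z)‖ ≤ M) :
    ‖T ^ n‖ ≤ M * (1 + |n * t|) := by
  have hpow : IsWeightedComp (fun z ↦ ∏ j ∈ Finset.range n, ψ (parabolicAut a (j * t) z))
      (parabolicAut a (n * t)) (T ^ n) := by
    refine (hT.pow (mapsTo_discAffine_ball ha one_pos t) n).congr (fun z hz ↦ ?_) fun z hz ↦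
      iterate_parabolicAut ha t n (ball_subset_closedBall hz)
    simp only [iterate_parabolicAut ha t _ (ball_subset_closedBall hz)]
  have hprod : DiffContOnCl ℂ (fun z ↦ ∏ j ∈ Finset.range n, ψ (parabolicAut a (j * t) z))
      (ball 0 1) :=
    have hfactor (j : ℕ) := diffContOnCl_comp_parabolicAut ha (j * t) hψ
    ⟨.fun_finsetProd fun j _ ↦ (hfactor j).differentiableOn,
      continuousOn_finsetProd _ fun j _ ↦ (hfactor j).continuousOn⟩
  exact norm_le_of_isWeightedComp_parabolicAut ha _ hprod hM hpow

end PowersAndInverse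

include ht

theorem card_filter_le_norm_sub_parabolicAut_le {δ : ℝ} (hδ : 0 < δ) (n : ℕ) {z : ℂ}
    (hz : z ∈ closedBall (0 : ℂ) 1) :
    ((Finset.range n).filter fun j : ℕ ↦ δ ≤ ‖a - parabolicAut a (j * t) z‖).card ≤
      ⌊2 * (2 / δ) / |t|⌋₊ + 1 := by
  rcases eq_or_ne z a with rfl | hza
  · simp [discAffine_self, hδ.not_ge]
  refine card_le_floor_of_abs_add_mul_le (y := (toHalfPlane a z).re) ht fun j hj ↦ ?_
  have hre : (toHalfPlane a z).re + j * t = (toHalfPlane a (parabolicAut a (j * t) z)).re := by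
    simp [toHalfPlane_parabolicAut ha (j * t) hz hza]
  rw [hre, le_div_iff₀ hδ]
  exact (mul_le_mul_of_nonneg_left (Finset.mem_filter.1 hj).2 (abs_nonneg _)).trans
    (abs_re_toHalfPlane_mul_norm_sub_le ha (discAffine_ne ha one_pos _ hz hza))

theorem exists_norm_prod_comp_parabolicAut_le
    (hψ : ContinuousOn ψ (closedBall 0 1)) {ρ : ℝ} (hρ : ‖ψ a‖ < ρ) :
    ∃ C, ∀ n : ℕ, ∀ z ∈ closedBall (0 : ℂ) 1,
      ‖∏ j ∈ Finset.range n, ψ (parabolicAut a (j * t) z)‖ ≤ C * ρ ^ n := by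
  have hρ0 : 0 < ρ := (norm_nonneg _).trans_lt hρ
  obtain ⟨M, hM⟩ := (isCompact_closedBall (0 : ℂ) 1).exists_bound_of_continuousOn hψ
  obtain ⟨δ, hδ, hnear⟩ : ∃ δ > 0, ball a δ ∩ closedBall 0 1 ⊆ {z | ‖ψ z‖ < ρ} :=
    mem_nhdsWithin_iff.1 ((hψ a (by simp [ha])).norm.eventually (gt_mem_nhds hρ))
  refine ⟨(max M ρ / ρ) ^ (⌊2 * (2 / δ) / |t|⌋₊ + 1), fun n z hz ↦ ?_⟩
  have hmem (j : ℕ) : parabolicAut a (j * t) z ∈ closedBall (0 : ℂ) 1 :=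
    mapsTo_discAffine_closedBall ha one_pos _ hz
  -- An orbit of the translation spends boundedly many steps away from `a`, and near `a` each factor
  -- is at most `ρ`.
  rw [norm_prod]
  nth_rw 2 [← Finset.card_range n]
  refine prod_le_of_card_filter_le hρ0 (le_max_right M ρ) (fun _ _ ↦ norm_nonneg _)
    (fun j _ ↦ (hM _ (hmem j)).trans (le_max_left M ρ)) (fun j _ hj ↦ ?_)
    (by simpa using card_filter_le_norm_sub_parabolicAut_le ha ht hδ n hz)
  exact (hnear ⟨by simpa [dist_eq_norm, norm_sub_rev] using hj, hmem j⟩).le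

variable {T : H2 →L[ℂ] H2} (hT : IsWeightedComp ψ (parabolicAut a t) T)
include hψ hT

theorem norm_le_of_mem_spectrum_weightedComp {lam : ℂ} (hlam : lam ∈ spectrum ℂ T) :
    ‖lam‖ ≤ ‖ψ a‖ := by
  refine le_of_forall_gt_imp_ge_of_dense fun ρ hρ ↦ ?_
  have hρ0 : 0 < ρ := (norm_nonneg _).trans_lt hρ
  obtain ⟨C, hC⟩ := exists_norm_prod_comp_parabolicAut_le ha ht hψ.continuousOn_ball hρ
  have hC0 : 0 ≤ C := by simpa using (norm_nonneg _).trans (hC 0 0 (by simp))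
  refine norm_le_of_mem_spectrum_of_norm_pow_le (K := C * (1 + |t|)) hρ0 (fun n ↦ ?_) hlam
  calc ‖T ^ n‖ ≤ C * ρ ^ n * (1 + |n * t|) :=
        norm_pow_le_of_isWeightedComp_parabolicAut ha hψ hT n (hC n)
    _ ≤ C * ρ ^ n * ((1 + |t|) * (n + 1)) := by
        rw [abs_mul, Nat.abs_cast]
        gcongr
        nlinarith [abs_nonneg t, (n.cast_nonneg : (0 : ℝ) ≤ n)]
    _ = C * (1 + |t|) * ((n + 1) * ρ ^ n) := by ring

theorem norm_eq_of_mem_spectrum_weightedComp (hψ0 : ∀ z ∈ closedBall (0 : ℂ) 1, ψ z ≠ 0) {lam : ℂ}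
    (hlam : lam ∈ spectrum ℂ T) : ‖lam‖ = ‖ψ a‖ := by
  obtain ⟨S, hS, hTS, hST⟩ := exists_isWeightedComp_inv ha hψ hT hψ0
  have hlam0 : lam ≠ 0 := by
    rintro rfl
    exact spectrum.zero_notMem ℂ (isUnit_iff_exists.2 ⟨S, hTS, hST⟩) hlam
  have hinv : lam⁻¹ ∈ spectrum ℂ S := by
    simpa using (spectrum.inv_mem_iff (r := Units.mk0 lam hlam0) (a := ⟨T, S, hTS, hST⟩)).1 hlam
  have hle := norm_le_of_mem_spectrum_weightedComp ha (neg_ne_zero.2 ht)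
    (diffContOnCl_inv_comp_parabolicAut ha hψ hψ0) hS hinv
  simp only [discAffine_self] at hle
  rw [norm_inv, norm_inv,
    inv_le_inv₀ (norm_pos_iff.2 hlam0) (norm_pos_iff.2 (hψ0 a (by simp [ha])))] at hle
  exact (norm_le_of_mem_spectrum_weightedComp ha ht hψ hT hlam).antisymm hle

end SpectrumSubset

/-! ### Rotation invariance of the spectrum -/

section BoundedBelow

variable {𝕜 E : Type*} [NontriviallyNormedField 𝕜] [NormedAddCommGroup E] [NormedSpace 𝕜 E]
  {T : E →L[𝕜] E} {lam : 𝕜}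

theorem exists_norm_le_of_mem_resolventSet (h : lam ∈ resolventSet 𝕜 T) :
    ∃ C, ∀ f, ‖f‖ ≤ C * ‖lam • f - T f‖ := by
  obtain ⟨u, hu⟩ := spectrum.mem_resolventSet_iff.1 h
  refine ⟨‖(↑u⁻¹ : E →L[𝕜] E)‖, fun f ↦ ?_⟩
  have hf : (↑u⁻¹ : E →L[𝕜] E) (lam • f - T f) = f := by
    simpa [hu, Algebra.algebraMap_eq_smul_one] using DFunLike.congr_fun u.inv_mul f
  calc ‖f‖ = ‖(↑u⁻¹ : E →L[𝕜] E) (lam • f - T f)‖ := by rw [hf]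
    _ ≤ _ := ContinuousLinearMap.le_opNorm _ _

theorem mem_resolventSet_of_mem_closure [CompleteSpace E]
    (hlam : lam ∈ closure (resolventSet 𝕜 T)) {C : ℝ} (hC : ∀ f, ‖f‖ ≤ C * ‖lam • f - T f‖) :
    lam ∈ resolventSet 𝕜 T := by
  obtain ⟨μ, hμ, hdist⟩ := Metric.mem_closure_iff.1 hlam (4 * (|C| + 1))⁻¹ (by positivity)
  obtain ⟨u, hu⟩ := spectrum.mem_resolventSet_iff.1 hμ
  have hsmall : |C| * ‖μ - lam‖ ≤ 4⁻¹ := by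
    rw [dist_comm, dist_eq_norm, ← one_div, lt_div_iff₀ (by positivity)] at hdist
    linarith [norm_nonneg (μ - lam)]
  have hu_apply (f : E) : (u : E →L[𝕜] E) f = μ • f - T f := by
    simp [hu, Algebra.algebraMap_eq_smul_one]
  have hinv (f : E) : ‖(↑u⁻¹ : E →L[𝕜] E) f‖ ≤ 2 * |C| * ‖f‖ := by
    set g := (↑u⁻¹ : E →L[𝕜] E) f
    have hg : lam • g - T g = f - (μ - lam) • g := by
      have hug : μ • g - T g = f := by
        rw [← hu_apply]
        exact DFunLike.congr_fun u.mul_inv f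
      rw [← hug, sub_smul]
      abel
    have hle : ‖g‖ ≤ |C| * (‖f‖ + ‖μ - lam‖ * ‖g‖) := by
      rw [← norm_smul]
      refine (hC g).trans (mul_le_mul (le_abs_self C) ?_ (norm_nonneg _) (abs_nonneg C))
      exact hg ▸ norm_sub_le _ _
    linarith [mul_le_mul_of_nonneg_right hsmall (norm_nonneg g), norm_nonneg g]
  have hnorm : ‖(μ - lam) • (↑u⁻¹ : E →L[𝕜] E)‖ < 1 := by
    have := ContinuousLinearMap.opNorm_le_bound _ (by positivity) hinv
    rw [norm_smul]
    nlinarith [norm_nonneg (μ - lam)]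
  have hfactor : algebraMap 𝕜 (E →L[𝕜] E) lam - T = u * (1 - (μ - lam) • ↑u⁻¹) := by
    rw [mul_sub, mul_one, mul_smul_comm, Units.mul_inv, ← Algebra.algebraMap_eq_smul_one, hu,
      map_sub]
    abel
  rw [spectrum.mem_resolventSet_iff, hfactor]
  exact u.isUnit.mul (isUnit_one_sub_of_norm_lt_one hnorm)

end BoundedBelow

theorem mem_closure_compl_of_subset_sphere {s : Set ℂ} {r : ℝ} (hr : r ≠ 0)
    (hs : s ⊆ sphere 0 r) (z : ℂ) : z ∈ closure sᶜ := by
  have hinterior : interior s = ∅ :=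
    subset_empty_iff.1 ((interior_mono hs).trans_eq (interior_sphere 0 hr))
  rw [closure_compl, hinterior, compl_empty]
  exact mem_univ z

/-- The atomic singular inner function `exp (i σ ζ)`, where `ζ` is the half-plane coordinate at `a`:
an eigenfunction of `f ↦ f ∘ parabolicAut a t` with eigenvalue `exp (i σ t)`. -/
noncomputable def singularInner (a : ℂ) (σ : ℝ) (z : ℂ) : ℂ := Complex.exp (I * σ * toHalfPlane a z)

section SingularInner

variable {a : ℂ} (ha : ‖a‖ = 1) {σ : ℝ} (hσ : 0 ≤ σ)
include ha

theorem singularInner_parabolicAut (t : ℝ) {z : ℂ} (hz : z ∈ closedBall (0 : ℂ) 1) (hza : z ≠ a) :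
    singularInner a σ (parabolicAut a t z) =
      Complex.exp (I * σ * t) * singularInner a σ z := by
  rw [singularInner, toHalfPlane_parabolicAut ha t hz hza, mul_add, Complex.exp_add, mul_comm,
    singularInner]

theorem norm_singularInner_ofHalfPlane_ofReal (σ x : ℝ) :
    ‖singularInner a σ (ofHalfPlane a x)‖ = 1 := by
  rw [singularInner, toHalfPlane_ofHalfPlane ha (ofReal_im x).ge, Complex.norm_exp]
  simp

include hσ

theorem norm_singularInner_le_one {z : ℂ} (hz : z ∈ closedBall (0 : ℂ) 1) :
    ‖singularInner a σ z‖ ≤ 1 := by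
  rw [singularInner, Complex.norm_exp, Real.exp_le_one_iff]
  simpa using mul_nonneg hσ (im_toHalfPlane_nonneg ha hz)

theorem diffContOnCl_singularInner_mul {f : ℂ → ℂ} (hf : DiffContOnCl ℂ f (ball 0 1))
    (hfa : f a = 0) : DiffContOnCl ℂ (fun z ↦ singularInner a σ z * f z) (ball 0 1) := by
  have hdiff {z : ℂ} (hz : z ≠ a) : DifferentiableAt ℂ (singularInner a σ) z := by
    have hsub : a - z ≠ 0 := sub_ne_zero.2 hz.symm
    unfold singularInner toHalfPlane
    fun_prop (disch := assumption)
  have hcont := hf.continuousOn_ball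
  refine .mk_ball (fun z hz ↦ ((hdiff (ne_of_mem_ball ha hz)).differentiableWithinAt).mul
    (hf.differentiableOn z hz)) fun z hz ↦ ?_
  rcases eq_or_ne z a with rfl | hza
  · have hle : ∀ᶠ w in 𝓝[closedBall 0 1] z, ‖singularInner z σ w * f w‖ ≤ ‖f w‖ := by
      filter_upwards [self_mem_nhdsWithin] with w hw
      rw [norm_mul]
      exact mul_le_of_le_one_left (norm_nonneg _) (norm_singularInner_le_one ha hσ hw)
    rw [ContinuousWithinAt, hfa, mul_zero]
    exact squeeze_zero_norm' hle (by simpa [hfa] using (hcont z hz).norm.tendsto)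
  · exact (hdiff hza).continuousAt.continuousWithinAt.mul (hcont z hz)

theorem exists_isWeightedComp_singularInner :
    ∃ M : H2 →L[ℂ] H2, IsWeightedComp (singularInner a σ) id M ∧ ∀ f, ‖M f‖ = ‖f‖ := by
  have hisom : ∀ F ∈ H2.vanishingAt a, ∃ G : H2,
      (∀ z ∈ ball (0 : ℂ) 1, G.toFun z = singularInner a σ z * F.toFun z) ∧ ‖G‖ = ‖F‖ := by
    rintro F ⟨f, hf, hfa, hF⟩
    have hef := diffContOnCl_singularInner_mul ha hσ hf hfa
    obtain ⟨G, hG, -⟩ := H2.exists_toFun_eqOn hef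
    refine ⟨G, fun z hz ↦ by rw [hG hz, hF hz], ?_⟩
    rw [← sq_eq_sq₀ (norm_nonneg _) (norm_nonneg _), H2.norm_sq_eq_integral ha hef hG,
      H2.norm_sq_eq_integral ha hf hF]
    simp only [norm_mul, norm_singularInner_ofHalfPlane_ofReal ha, one_mul]
  have hdense := H2.dense_vanishingAt ha
  obtain ⟨M, hM, -⟩ := IsWeightedComp.exists_of_dense (C := 1) hdense (mapsTo_id _)
    fun F hF ↦ (hisom F hF).imp fun G hG ↦ ⟨hG.1, by rw [hG.2, one_mul]⟩
  refine ⟨M, hM, fun f ↦ hdense.induction (fun F hF ↦ ?_)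
    (isClosed_eq M.continuous.norm continuous_norm) f⟩
  obtain ⟨G, hGfun, hGnorm⟩ := hisom F hF
  have hMF : M F = G := H2.ext_toFun fun z hz ↦ by rw [hM F z hz, hGfun z hz, id]
  rw [hMF, hGnorm]

end SingularInner

theorem exists_nonneg_eq_mul_exp {t : ℝ} (ht : t ≠ 0) {lam μ : ℂ} (hlam : lam ≠ 0)
    (h : ‖μ‖ = ‖lam‖) : ∃ σ : ℝ, 0 ≤ σ ∧ μ = lam * Complex.exp (I * σ * t) := by
  have hexp : lam * Complex.exp (arg (μ / lam) * I) = μ := by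
    have hpolar := norm_mul_exp_arg_mul_I (μ / lam)
    rw [norm_div, h, div_self (norm_ne_zero_iff.2 hlam), ofReal_one, one_mul] at hpolar
    rw [hpolar, mul_div_cancel₀ _ hlam]
  have htC : (t : ℂ) ≠ 0 := ofReal_ne_zero.2 ht
  obtain ⟨k, hk⟩ : ∃ k : ℤ, 0 ≤ (arg (μ / lam) + k * (2 * π)) / t := by
    have hlo := neg_pi_lt_arg (μ / lam)
    have hhi := arg_le_pi (μ / lam)
    have hpi := pi_pos
    rcases ht.lt_or_gt with hneg | hpos
    · exact ⟨-1, div_nonneg_of_nonpos (by push_cast; linarith) hneg.le⟩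
    · exact ⟨1, div_nonneg (by push_cast; linarith) hpos.le⟩
  refine ⟨_, hk, ?_⟩
  have hperiod : I * ((arg (μ / lam) + k * (2 * π)) / t : ℝ) * t =
      arg (μ / lam) * I + k * (2 * π * I) := by
    push_cast
    field_simp
  rw [hperiod, Complex.exp_periodic.int_mul k, hexp]

section Rotation

variable {a : ℂ} (ha : ‖a‖ = 1) {t : ℝ} {ψ : ℂ → ℂ} {T : H2 →L[ℂ] H2}
  (hT : IsWeightedComp ψ (parabolicAut a t) T)
include ha hT

theorem apply_isWeightedComp_singularInner {σ : ℝ} {M : H2 →L[ℂ] H2}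
    (hM : IsWeightedComp (singularInner a σ) id M) (f : H2) :
    T (M f) = Complex.exp (I * σ * t) • M (T f) := by
  refine H2.ext_toFun fun z hz ↦ ?_
  rw [hT _ z hz, hM _ _ (mapsTo_discAffine_ball ha one_pos t hz), H2.toFun_smul _ _ hz, hM _ z hz,
    singularInner_parabolicAut ha t (ball_subset_closedBall hz) (ne_of_mem_ball ha hz), id, id,
    hT f z hz]
  ring

theorem mul_exp_mem_spectrum_weightedComp {lam : ℂ} (hlam : lam ∈ spectrum ℂ T)
    (hclosure : lam ∈ closure (resolventSet ℂ T)) {σ : ℝ} (hσ : 0 ≤ σ) :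
    lam * Complex.exp (I * σ * t) ∈ spectrum ℂ T := by
  by_contra hnot
  -- Multiplication by `singularInner a σ` is an isometry intertwining `lam - T` with a multiple of
  -- `lam * exp (i σ t) - T`, so a lower bound for the latter gives one for the former.
  obtain ⟨C, hC⟩ := exists_norm_le_of_mem_resolventSet (not_not.1 hnot)
  obtain ⟨M, hM, hisom⟩ := exists_isWeightedComp_singularInner ha hσ
  have hunimodular : ‖Complex.exp (I * σ * t)‖ = 1 := by simp [Complex.norm_exp]
  refine hlam (mem_resolventSet_of_mem_closure hclosure (C := C) fun f ↦ ?_)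
  have hconj : (lam * Complex.exp (I * σ * t)) • M f - T (M f) =
      Complex.exp (I * σ * t) • M (lam • f - T f) := by
    rw [apply_isWeightedComp_singularInner ha hT hM, map_sub, map_smul, smul_sub, smul_smul,
      mul_comm]
  calc ‖f‖ = ‖M f‖ := (hisom f).symm
    _ ≤ C * ‖(lam * Complex.exp (I * σ * t)) • M f - T (M f)‖ := hC (M f)
    _ = C * ‖lam • f - T f‖ := by rw [hconj, norm_smul, hunimodular, one_mul, hisom]

theorem spectrum_weightedComp_parabolicAut (ht : t ≠ 0) (hψ : DiffContOnCl ℂ ψ (ball 0 1))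
    (hψ0 : ∀ z ∈ closedBall (0 : ℂ) 1, ψ z ≠ 0) : spectrum ℂ T = {lam : ℂ | ‖lam‖ = ‖ψ a‖} := by
  have hψa : ‖ψ a‖ ≠ 0 := norm_ne_zero_iff.2 (hψ0 a (by simp [ha]))
  have hnorm {lam : ℂ} (hlam : lam ∈ spectrum ℂ T) : ‖lam‖ = ‖ψ a‖ :=
    norm_eq_of_mem_spectrum_weightedComp ha ht hψ hT hψ0 hlam
  refine Subset.antisymm (fun lam hlam ↦ hnorm hlam) fun μ hμ ↦ ?_
  obtain ⟨lam, hlam⟩ : (spectrum ℂ T).Nonempty := spectrum.nonempty T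
  have hlam0 : lam ≠ 0 := norm_ne_zero_iff.1 ((hnorm hlam).trans_ne hψa)
  have hclosure : lam ∈ closure (resolventSet ℂ T) := by
    simpa [spectrum] using mem_closure_compl_of_subset_sphere hψa
      (fun w hw ↦ mem_sphere_zero_iff_norm.2 (hnorm hw)) lam
  obtain ⟨σ, hσ, rfl⟩ := exists_nonneg_eq_mul_exp ht hlam0 (hμ.trans (hnorm hlam).symm)
  exact mul_exp_mem_spectrum_weightedComp ha hT hlam hclosure hσ

end Rotation

/-! ### Classification of parabolic automorphisms -/

theorem exists_eqOn_mul_of_leftInvOn {f g : ℂ → ℂ} (hf : DifferentiableOn ℂ f (ball 0 1))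
    (hg : DifferentiableOn ℂ g (ball 0 1)) (hfm : MapsTo f (ball 0 1) (ball 0 1))
    (hgm : MapsTo g (ball 0 1) (ball 0 1)) (hgf : LeftInvOn g f (ball 0 1)) (hf0 : f 0 = 0) :
    ∃ c : ℂ, EqOn f (fun z ↦ c * z) (ball 0 1) := by
  have hg0 : g 0 = 0 := by simpa [hf0] using hgf (mem_ball_self one_pos)
  have hnorm {z : ℂ} (hz : z ∈ ball (0 : ℂ) 1) : ‖f z‖ = ‖z‖ := by
    refine le_antisymm (norm_le_norm_of_mapsTo_ball hf (hfm.mono_right ball_subset_closedBall) hf0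
      (mem_ball_zero_iff.1 hz)) ?_
    simpa [hgf hz] using norm_le_norm_of_mapsTo_ball hg (hgm.mono_right ball_subset_closedBall) hg0
      (mem_ball_zero_iff.1 (hfm hz))
  have hhalf : (2⁻¹ : ℂ) ∈ ball (0 : ℂ) 1 := by
    rw [mem_ball_zero_iff]
    norm_num
  have hdslope : ‖dslope f 0 2⁻¹‖ = 1 / 1 := by
    rw [dslope_of_ne _ (by norm_num), slope_def_module, hf0, sub_zero, sub_zero, norm_smul,
      hnorm hhalf]
    simp
  obtain ⟨c, -, hc⟩ := affine_of_mapsTo_ball_of_exists_norm_dslope_eq_div' hf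
    (by simpa [hf0] using hfm.mono_right ball_subset_closedBall) ⟨2⁻¹, hhalf, hdslope⟩
  refine ⟨c, fun z hz ↦ ?_⟩
  simpa [hf0, mul_comm] using hc hz

section Classification

variable {a : ℂ} (ha : ‖a‖ = 1)
include ha

theorem discAffine_inv_discAffine {k : ℝ} (hk : 0 < k) (t : ℝ) {z : ℂ}
    (hz : z ∈ closedBall (0 : ℂ) 1) :
    discAffine a k⁻¹ (-(k⁻¹ * t)) (discAffine a k t z) = z := by
  rw [discAffine_discAffine ha hk t hz, inv_mul_cancel₀ hk.ne', add_neg_cancel]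
  exact parabolicAut_zero ha z

theorem exists_discAffine_eq_zero {z : ℂ} (hz : z ∈ ball (0 : ℂ) 1) :
    ∃ k > 0, ∃ t, discAffine a k t z = 0 := by
  have him := im_toHalfPlane_pos ha hz
  refine ⟨(toHalfPlane a z).im⁻¹, inv_pos.2 him, -((toHalfPlane a z).im⁻¹ * (toHalfPlane a z).re),
    ?_⟩
  have hI : ((toHalfPlane a z).im⁻¹ : ℝ) * toHalfPlane a z +
      (-((toHalfPlane a z).im⁻¹ * (toHalfPlane a z).re) : ℝ) = I :=
    Complex.ext (by simp) (by simp [him.ne'])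
  rw [discAffine_eq_ofHalfPlane _ _ (ne_of_mem_ball ha hz), hI, ofHalfPlane, ← two_mul,
    mul_div_cancel_left₀ _ (by simp), sub_self]

theorem exists_eqOn_discAffine {φ φinv : ℂ → ℂ} (hφ : DiffContOnCl ℂ φ (ball 0 1))
    (hφinv : DifferentiableOn ℂ φinv (ball 0 1)) (hφm : MapsTo φ (ball 0 1) (ball 0 1))
    (hφinvm : MapsTo φinv (ball 0 1) (ball 0 1)) (hleft : LeftInvOn φinv φ (ball 0 1))
    (hfix : φ a = a) : ∃ k > 0, ∃ t, EqOn φ (discAffine a k t) (closedBall 0 1) := by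
  obtain ⟨k, hk, t, hzero⟩ := exists_discAffine_eq_zero ha (hφm (mem_ball_self one_pos))
  have hk' := inv_pos.2 hk
  have hmaps := mapsTo_discAffine_ball ha hk t
  have hmaps' := mapsTo_discAffine_ball ha hk' (-(k⁻¹ * t))
  have hA := (diffContOnCl_discAffine ha hk t).comp hφ hφm
  obtain ⟨c, hc⟩ := exists_eqOn_mul_of_leftInvOn hA.differentiableOn
    (hφinv.comp (diffContOnCl_discAffine ha hk' (-(k⁻¹ * t))).differentiableOn hmaps')
    (hmaps.comp hφm) (hφinvm.comp hmaps') (fun z hz ↦ by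
      simp only [Function.comp_apply,
        discAffine_inv_discAffine ha hk t (ball_subset_closedBall (hφm hz)), hleft hz]) hzero
  have hclosed : EqOn (discAffine a k t ∘ φ) (fun z ↦ c * z) (closedBall 0 1) :=
    hc.of_subset_closure hA.continuousOn_ball (by fun_prop) ball_subset_closedBall
      (closure_ball _ one_ne_zero).ge
  have hc1 : c = 1 := by
    have hca := hclosed (show a ∈ closedBall 0 1 by simp [ha])
    rw [Function.comp_apply, hfix, discAffine_self] at hca
    exact (right_eq_mul₀ (ne_zero_of_norm_eq_one ha)).1 hca
  have hφclosed : MapsTo φ (closedBall 0 1) (closedBall 0 1) := by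
    simpa only [closure_ball _ one_ne_zero] using hφm.closure_of_continuousOn hφ.continuousOn
  refine ⟨k⁻¹, hk', -(k⁻¹ * t), fun z hz ↦ ?_⟩
  have hz1 : discAffine a k t (φ z) = z := by simpa [hc1] using hclosed hz
  nth_rw 2 [← hz1]
  rw [discAffine_inv_discAffine ha hk t (hφclosed hz)]

theorem eq_one_and_ne_zero_of_forall_discAffine_eq_self {k t : ℝ}
    (honly : ∀ z ∈ closedBall (0 : ℂ) 1, discAffine a k t z = z → z = a) : k = 1 ∧ t ≠ 0 := by
  have hk : k = 1 := by
    by_contra hk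
    have hmem := (ofReal_im (t / (1 - k))).ge
    refine ofHalfPlane_ne ha hmem (honly _ (ofHalfPlane_mem_closedBall ha hmem) ?_)
    have hfixed : k * (t / (1 - k)) + t = t / (1 - k) := by
      have hk' : 1 - k ≠ 0 := sub_ne_zero.2 (Ne.symm hk)
      field_simp
      ring
    rw [discAffine_ofHalfPlane_ofReal ha, hfixed]
  refine ⟨hk, fun ht ↦ ne_zero_of_norm_eq_one ha (honly 0 (by simp) ?_).symm⟩
  rw [hk, ht]
  exact parabolicAut_zero ha 0

theorem exists_eqOn_parabolicAut {φ φinv : ℂ → ℂ} (hφ : DiffContOnCl ℂ φ (ball 0 1))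
    (hφinv : DifferentiableOn ℂ φinv (ball 0 1)) (hφm : MapsTo φ (ball 0 1) (ball 0 1))
    (hφinvm : MapsTo φinv (ball 0 1) (ball 0 1)) (hleft : LeftInvOn φinv φ (ball 0 1))
    (hfix : φ a = a) (honly : ∀ z ∈ closedBall (0 : ℂ) 1, φ z = z → z = a) :
    ∃ t ≠ 0, EqOn φ (parabolicAut a t) (closedBall 0 1) := by
  obtain ⟨k, -, t, hEq⟩ := exists_eqOn_discAffine ha hφ hφinv hφm hφinvm hleft hfix
  obtain ⟨rfl, ht⟩ := eq_one_and_ne_zero_of_forall_discAffine_eq_self ha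
    fun z hz hfixed ↦ honly z hz ((hEq hz).trans hfixed)
  exact ⟨t, ht, hEq⟩

end Classification

/-- Let `φ` be a parabolic automorphism of `𝔻` with unique fixed point `a ∈ ∂𝔻`, and let `ψ`
be holomorphic on `𝔻`, continuous on the closed disc and bounded away from zero. Then the
spectrum of the weighted composition operator `C_{ψ,φ}` on `H²(𝔻)` is the circle
`{λ : |λ| = |ψ(a)|}`. -/
theorem stmt18 (φ φinv : ℂ → ℂ)
    (hφc : ContinuousOn φ (closedBall 0 1))
    (hφ : DifferentiableOn ℂ φ (ball 0 1))
    (hφinv : DifferentiableOn ℂ φinv (ball 0 1))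
    (hφm : Set.MapsTo φ (ball 0 1) (ball 0 1))
    (hφinvm : Set.MapsTo φinv (ball 0 1) (ball 0 1))
    (hleft : ∀ z ∈ ball (0 : ℂ) 1, φinv (φ z) = z)
    (hright : ∀ z ∈ ball (0 : ℂ) 1, φ (φinv z) = z)
    (a : ℂ) (ha : ‖a‖ = 1) (hfix : φ a = a)
    (honly : ∀ z ∈ closedBall (0 : ℂ) 1, φ z = z → z = a)
    (ψ : ℂ → ℂ)
    (hψc : ContinuousOn ψ (closedBall 0 1))
    (hψ : DifferentiableOn ℂ ψ (ball 0 1))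
    (hψ0 : ∃ ε > (0 : ℝ), ∀ z ∈ ball (0 : ℂ) 1, ε ≤ ‖ψ z‖)
    (T : H2 →L[ℂ] H2)
    (hT : ∀ f : H2, ∀ z ∈ ball (0 : ℂ) 1, (T f).toFun z = ψ z * f.toFun (φ z)) :
    spectrum ℂ T = {lam : ℂ | ‖lam‖ = ‖ψ a‖} := by
  have hψcl : DiffContOnCl ℂ ψ (ball 0 1) := ⟨hψ, by rwa [closure_ball _ one_ne_zero]⟩
  have hφcl : DiffContOnCl ℂ φ (ball 0 1) := ⟨hφ, by rwa [closure_ball _ one_ne_zero]⟩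
  obtain ⟨t, ht, hEq⟩ := exists_eqOn_parabolicAut ha hφcl hφinv hφm hφinvm hleft hfix honly
  have hT' : IsWeightedComp ψ (parabolicAut a t) T :=
    IsWeightedComp.congr hT (eqOn_refl ψ _) (hEq.mono ball_subset_closedBall)
  obtain ⟨ε, hε, hle⟩ := hψ0
  have hψne : ∀ z ∈ closedBall (0 : ℂ) 1, ψ z ≠ 0 := fun z hz ↦ by
    rw [← closure_ball _ one_ne_zero] at hz
    exact norm_pos_iff.1 (hε.trans_le
      (le_on_closure hle continuousOn_const hψcl.continuousOn.norm hz))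
  exact spectrum_weightedComp_parabolicAut ha hT' ht hψcl hψne
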